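/- For n ≥ 5, the map sending ρ' ∈ A(n−1) to the permutation ρ of {0,1,…,n−1} defined by ρ(i)=ρ'(i) for 0≤i≤n−3, ρ(n−2)=n−1, and ρ(n−1)=ρ'(n−2) is a well-defined injection from A(n−1) into A(n), and every permutation ρ in its image satisfies ρ(n−3)=n−2. -/

import Mathlib

/-- The set `A(n)` of permutations `ρ` of `{0,1,…,n−1}` with `ρ(0)=0`, `ρ(1)=2`,
and `ρ(i)≠i`, `ρ(i)≤i+1` for all `i` with `1 ≤ i ≤ n−1`. -/
def molsA (n : ℕ) : Finset (Equiv.Perm (Fin n)) :=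
  Finset.univ.filter fun ρ =>
    (∀ i : Fin n, (i : ℕ) = 0 → (ρ i : ℕ) = 0) ∧
    (∀ i : Fin n, (i : ℕ) = 1 → (ρ i : ℕ) = 2) ∧
    (∀ i : Fin n, 1 ≤ (i : ℕ) → (ρ i : ℕ) ≠ (i : ℕ) ∧ (ρ i : ℕ) ≤ (i : ℕ) + 1)

/-- `a(n)`, the number of such permutations. -/
def molsa (n : ℕ) : ℕ := (molsA n).card

/-!
The insertion is `ρ' ↦ ρ'⁺ * (n−2 n−1)`, where `ρ'⁺` extends `ρ'` by fixing the new point `n−1`: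
a group embedding followed by a right translation, hence injective. If `ρ' ∈ A(n−1)` takes its
largest value `n−2` at `i`, then `i ≠ 0` since `ρ'(0) = 0`, and `i ≠ ρ'(i) = n−2 ≤ i+1` leaves only
`i = n−3`.
-/

open Equiv

section Insertion

variable {m : ℕ} (σ : Perm (Fin (m + 1)))

/-- The insertion of the new largest value `m + 1` just before the last entry of `σ` in one-line
notation: it is appended at the end, then the last two entries are exchanged. -/
noncomputable def insertPenultimate : Perm (Fin (m + 2)) :=
  σ.viaEmbedding Fin.castSuccEmb * swap (Fin.last m).castSucc (Fin.last (m + 1))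

theorem insertPenultimate_castSucc_castSucc (i : Fin m) :
    insertPenultimate σ i.castSucc.castSucc = (σ i.castSucc).castSucc := by
  have hne : i.castSucc.castSucc ≠ (Fin.last m).castSucc :=
    (Fin.castSucc_injective _).ne i.castSucc_ne_last
  rw [insertPenultimate, Perm.mul_apply, swap_apply_of_ne_of_ne hne (Fin.castSucc_ne_last _)]
  exact Perm.viaEmbedding_apply σ Fin.castSuccEmb i.castSucc

theorem insertPenultimate_castSucc_last :
    insertPenultimate σ (Fin.last m).castSucc = Fin.last (m + 1) := by
  rw [insertPenultimate, Perm.mul_apply, swap_apply_left]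
  exact Perm.viaEmbedding_apply_of_notMem σ Fin.castSuccEmb _ fun ⟨i, hi⟩ => i.castSucc_ne_last hi

theorem insertPenultimate_last :
    insertPenultimate σ (Fin.last (m + 1)) = (σ (Fin.last m)).castSucc := by
  rw [insertPenultimate, Perm.mul_apply, swap_apply_right]
  exact Perm.viaEmbedding_apply σ Fin.castSuccEmb (Fin.last m)

theorem insertPenultimate_injective :
    Function.Injective (insertPenultimate (m := m)) :=
  (mul_left_injective _).comp (Perm.viaEmbeddingHom_injective Fin.castSuccEmb)

end Insertion

theorem mem_molsA {n : ℕ} {ρ : Perm (Fin n)} :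
    ρ ∈ molsA n ↔
      (∀ i : Fin n, (i : ℕ) = 0 → (ρ i : ℕ) = 0) ∧
      (∀ i : Fin n, (i : ℕ) = 1 → (ρ i : ℕ) = 2) ∧
      (∀ i : Fin n, 1 ≤ (i : ℕ) → (ρ i : ℕ) ≠ (i : ℕ) ∧ (ρ i : ℕ) ≤ (i : ℕ) + 1) := by
  simp only [molsA, Finset.mem_filter_univ]

theorem apply_penultimate_of_mem_molsA {k : ℕ} {ρ : Perm (Fin (k + 2))} (hρ : ρ ∈ molsA (k + 2)) :
    ρ (Fin.last k).castSucc = Fin.last (k + 1) := by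
  obtain ⟨map_zero, -, bounds⟩ := mem_molsA.mp hρ
  obtain ⟨i, hi⟩ := ρ.surjective (Fin.last (k + 1))
  have hi_val : (ρ i : ℕ) = k + 1 := congrArg Fin.val hi
  have hi_pos : 1 ≤ (i : ℕ) := by
    by_contra h
    have := map_zero i (by omega)
    omega
  have i_eq : i = (Fin.last k).castSucc := by
    have := bounds i hi_pos
    ext
    simp only [Fin.val_castSucc, Fin.val_last]
    omega
  rwa [← i_eq]

theorem insertPenultimate_mem_molsA {m : ℕ} (hm : 2 ≤ m) {σ : Perm (Fin (m + 1))}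
    (hσ : σ ∈ molsA (m + 1)) : insertPenultimate σ ∈ molsA (m + 2) := by
  obtain ⟨map_zero, map_one, bounds⟩ := mem_molsA.mp hσ
  refine mem_molsA.mpr ⟨fun i hi => ?_, fun i hi => ?_, fun i hi => ?_⟩
  · obtain rfl : i = (⟨0, Nat.zero_lt_of_lt hm⟩ : Fin m).castSucc.castSucc := Fin.ext hi
    rw [insertPenultimate_castSucc_castSucc]
    exact map_zero _ rfl
  · obtain rfl : i = (⟨1, hm⟩ : Fin m).castSucc.castSucc := Fin.ext hi
    rw [insertPenultimate_castSucc_castSucc]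
    exact map_one _ rfl
  · induction i using Fin.lastCases with
    | last =>
      have := (σ (Fin.last m)).isLt
      simp only [insertPenultimate_last, Fin.val_castSucc, Fin.val_last]
      omega
    | cast i =>
      induction i using Fin.lastCases with
      | last =>
        simp only [insertPenultimate_castSucc_last, Fin.val_castSucc, Fin.val_last]
        omega
      | cast i =>
        rw [insertPenultimate_castSucc_castSucc]
        exact bounds i.castSucc hi

/-- For `n ≥ 5`, the map sending `ρ' ∈ A(n−1)` to the permutation `ρ` of `{0,1,…,n−1}`
defined by `ρ(i) = ρ'(i)` for `0 ≤ i ≤ n−3`, `ρ(n−2) = n−1` and `ρ(n−1) = ρ'(n−2)` is a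
well-defined injection from `A(n−1)` into `A(n)`, and every permutation `ρ` in its image
satisfies `ρ(n−3) = n−2`. -/
theorem molsA_insert (n : ℕ) (hn : 5 ≤ n) :
    ∃ f : Equiv.Perm (Fin (n - 1)) → Equiv.Perm (Fin n),
      (∀ ρ' ∈ molsA (n - 1), f ρ' ∈ molsA n) ∧
      Set.InjOn f (molsA (n - 1)) ∧
      (∀ ρ' ∈ molsA (n - 1),
        (∀ i : Fin (n - 1), (i : ℕ) ≤ n - 3 →
          ((f ρ') (Fin.castLE (by omega) i) : ℕ) = (ρ' i : ℕ)) ∧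
        ((f ρ') ⟨n - 2, by omega⟩ : ℕ) = n - 1 ∧
        ((f ρ') ⟨n - 1, by omega⟩ : ℕ) = (ρ' ⟨n - 2, by omega⟩ : ℕ)) ∧
      (∀ ρ' ∈ molsA (n - 1), ((f ρ') ⟨n - 3, by omega⟩ : ℕ) = n - 2) := by
  obtain ⟨k, rfl⟩ := Nat.exists_eq_add_of_le' (by omega : 3 ≤ n)
  have apply_low (σ : Perm (Fin (k + 2))) (i : Fin (k + 1)) :
      (insertPenultimate σ i.castSucc.castSucc : ℕ) = σ i.castSucc :=
    congrArg Fin.val (insertPenultimate_castSucc_castSucc σ i)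
  refine ⟨insertPenultimate (m := k + 1), fun σ hσ => insertPenultimate_mem_molsA (by omega) hσ,
    insertPenultimate_injective.injOn, fun σ _ => ⟨fun i hi => ?_, ?_, ?_⟩, fun σ hσ => ?_⟩
  · exact apply_low σ ⟨i, Nat.lt_succ_of_le hi⟩
  · exact congrArg Fin.val (insertPenultimate_castSucc_last σ)
  · exact congrArg Fin.val (insertPenultimate_last σ)
  · exact (apply_low σ (Fin.last k)).trans (congrArg Fin.val (apply_penultimate_of_mem_molsA hσ))
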